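/- arXiv:2009.11855 — 2 statements merged into one kernel-verified Lean document; each statement's English description precedes it below -/
import Mathlib

section
/- If the Hermitian Toeplitz matrix T_y is neither positive semidefinite nor negative semidefinite (equivalently, it has at least one positive and at least one negative eigenvalue), then (BPC) has a unique solution w*, and w* is of the form Σ_{i=1}^N a_i δ_{x_i} with 1 ≤ N ≤ 2K_c, pairwise distinct x_i ∈ 𝕋, nonzero real weights a_i, at least one a_i > 0 and at least one a_j < 0. -/
open MeasureTheory Complex Real Matrix
open scoped Real ComplexOrder

noncomputable section

instance : Fact (0 < 2 * π) := ⟨by positivity⟩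

/-- The circle `𝕋 = ℝ/2πℤ`. -/
abbrev Circle2pi := AddCircle (2 * π)

/-- The `k`-th Fourier coefficient of a finite signed Borel measure `w` on `𝕋`:
`ŵ[k] = ∫ e^{-ikt} dw⁺(t) - ∫ e^{-ikt} dw⁻(t)`, where `w = w⁺ - w⁻` is the Jordan
decomposition. -/
noncomputable def sFourierCoeff (w : MeasureTheory.SignedMeasure Circle2pi) (k : ℤ) : ℂ :=
  (∫ t, fourier (-k) t ∂w.toJordanDecomposition.posPart)
    - ∫ t, fourier (-k) t ∂w.toJordanDecomposition.negPart

/-- The total variation norm `‖w‖ = w⁺(𝕋) + w⁻(𝕋)`. -/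
noncomputable def tvNorm (w : MeasureTheory.SignedMeasure Circle2pi) : ℝ :=
  (w.totalVariation Set.univ).toReal

/-- `w` is feasible for the data `y` : `ŵ[k] = y k` for all `|k| ≤ K_c`. -/
def Feasible (Kc : ℕ) (y : ℤ → ℂ) (w : MeasureTheory.SignedMeasure Circle2pi) : Prop :=
  ∀ k : ℤ, |k| ≤ (Kc : ℤ) → sFourierCoeff w k = y k

/-- `w` is a solution of the problem (BPC): it is feasible and minimizes the total
variation norm among feasible measures. -/
def IsBPCSolution (Kc : ℕ) (y : ℤ → ℂ) (w : MeasureTheory.SignedMeasure Circle2pi) : Prop :=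
  Feasible Kc y w ∧ ∀ v : MeasureTheory.SignedMeasure Circle2pi, Feasible Kc y v →
    tvNorm w ≤ tvNorm v

/-- The Dirac measure at `x ∈ 𝕋`, viewed as a signed measure. -/
noncomputable def diracSM (x : Circle2pi) : MeasureTheory.SignedMeasure Circle2pi :=
  (MeasureTheory.Measure.dirac x).toSignedMeasure

/-- The Hermitian Toeplitz matrix `T_y` with entries `(T_y)_{i,j} = y_{j-i}`. -/
def Ty (Kc : ℕ) (y : ℤ → ℂ) : Matrix (Fin (Kc + 1)) (Fin (Kc + 1)) ℂ :=
  Matrix.of fun i j => y ((j : ℤ) - (i : ℤ))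

/-!
In finite dimension, strong duality for atomic norms gives a real trigonometric polynomial `q` of
degree at most `K`, with `|q| ≤ 1`, and a discrete measure with the moments `y` whose mass equals
the value of `q` on `y`, so that this measure is optimal. Equality in `∫ q dw ≤ ‖w‖` forces every
optimal `w` to live on the contact set `{|q| = 1}`, with `q = 1` at positive atoms and `q = -1` at
negative ones.

A nonnegative discrete measure has a positive semidefinite Toeplitz matrix, so if `T_y` is
indefinite, the discrete optimum has atoms of both signs and `q` is not constant. Then `q'` is a
nonzero trigonometric polynomial of degree at most `K` vanishing on the contact set, which thus has
at most `2K` points. By Vandermonde, measures on at most `2K + 1` given points are determined by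
their moments, whence uniqueness.
-/

section
open Module Filter
open scoped Topology

variable {E : Type*} [AddCommGroup E] [Module ℝ E]

lemma isCompact_convexHull [TopologicalSpace E] [ContinuousAdd E]
    [ContinuousSMul ℝ E] [FiniteDimensional ℝ E] {s : Set E} (hs : IsCompact s) :
    IsCompact (convexHull ℝ s) := by
  let combos (n : ℕ) : Set E := (fun p : (Fin n → ℝ) × (Fin n → E) => ∑ i, p.1 i • p.2 i) ''
    (stdSimplex ℝ (Fin n) ×ˢ Set.univ.pi fun _ => s)
  have hcompact (n : ℕ) : IsCompact (combos n) :=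
    ((isCompact_stdSimplex ℝ (Fin n)).prod (isCompact_univ_pi fun _ => hs)).image (by fun_prop)
  -- Carathéodory: `finrank E + 1` points suffice.
  suffices h : convexHull ℝ s = ⋃ n ∈ Set.Iic (finrank ℝ E + 1), combos n by
    rw [h]
    exact (Set.finite_Iic _).isCompact_biUnion fun n _ => hcompact n
  refine Set.Subset.antisymm (fun x hx => ?_) (Set.iUnion₂_subset fun n _ => ?_)
  · obtain ⟨ι, _, z, w, hz, hind, hw, hw1, rfl⟩ := eq_pos_convex_span_of_mem_convexHull hx
    have hcard : Fintype.card ι ≤ finrank ℝ E + 1 :=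
      hind.card_le_finrank_succ.trans (by gcongr; exact Submodule.finrank_le _)
    let e := (Fintype.equivFin ι).symm
    refine Set.mem_biUnion (Set.mem_Iic.mpr hcard)
      ⟨(w ∘ e, z ∘ e), ⟨⟨fun i => (hw _).le, ?_⟩, fun i _ => hz ⟨e i, rfl⟩⟩, ?_⟩
    · exact (e.sum_comp w).trans hw1
    · exact e.sum_comp fun i => w i • z i
  · rintro _ ⟨⟨w, z⟩, ⟨⟨hw, hw1⟩, hz⟩, rfl⟩
    exact (convex_convexHull ℝ s).sum_mem (fun i _ => hw i) hw1
      fun i _ => subset_convexHull ℝ s (hz i trivial)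

lemma isCompact_absConvexHull [TopologicalSpace E] [IsTopologicalAddGroup E]
    [ContinuousSMul ℝ E] [FiniteDimensional ℝ E] {s : Set E} (hs : IsCompact s) :
    IsCompact (absConvexHull ℝ s) := by
  rw [← convexHull_union_neg_eq_absConvexHull]
  exact isCompact_convexHull (hs.union hs.neg)

lemma absorbent_absConvexHull {s : Set E} (hne : s.Nonempty) (hs : Submodule.span ℝ s = ⊤) :
    Absorbent ℝ (absConvexHull ℝ s) := by
  set B := absConvexHull ℝ s
  have hB : Balanced ℝ B := balanced_absConvexHull
  have hB0 : (0 : E) ∈ B := hB.zero_mem (absConvexHull_nonempty.mpr hne)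
  have absorbs_iff (x : E) : Absorbs ℝ B {x} ↔ ∀ᶠ a : ℝ in 𝓝 0, a • x ∈ B := by
    simp only [absorbs_iff_eventually_nhds_zero hB0, Set.mapsTo_singleton]
  intro z
  induction (hs ▸ Submodule.mem_top : z ∈ Submodule.span ℝ s) using Submodule.span_induction with
  | mem x hx => exact hB.absorbs_self.mono_right (by simpa using subset_absConvexHull hx)
  | zero => simp [absorbs_iff, hB0]
  | add x y _ _ hx hy =>
    rw [absorbs_iff] at *
    have hlim : Tendsto (fun a : ℝ => 2 * a) (𝓝 0) (𝓝 0) := by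
      simpa using (continuous_const_mul (2 : ℝ)).tendsto 0
    filter_upwards [hlim.eventually hx, hlim.eventually hy] with a hax hay
    convert convex_absConvexHull hax hay (by norm_num : (0 : ℝ) ≤ 1 / 2)
      (by norm_num : (0 : ℝ) ≤ 1 / 2) (by norm_num) using 1
    module
  | smul b x _ hx =>
    rw [absorbs_iff] at *
    have hlim : Tendsto (fun a : ℝ => a * b) (𝓝 0) (𝓝 0) := by
      simpa using (continuous_mul_const b).tendsto 0
    filter_upwards [hlim.eventually hx] with a ha
    rwa [smul_smul]

lemma exists_dual_eq_seminorm (p : Seminorm ℝ E) (z : E) :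
    ∃ f : Dual ℝ E, f z = p z ∧ ∀ x, |f x| ≤ p x := by
  obtain rfl | hz := eq_or_ne z 0
  · exact ⟨0, by simp, by simp⟩
  let f₀ : Dual ℝ (ℝ ∙ z) := p z • (LinearEquiv.coord ℝ E z hz).toLinearMap
  have hf₀ (x : ℝ ∙ z) : f₀ x ≤ p x := by
    have hx : p x = |LinearEquiv.coord ℝ E z hz x| * p z := by
      rw [← Real.norm_eq_abs, ← map_smul_eq_mul, LinearEquiv.coord_apply_smul]
    rw [hx, mul_comm]
    exact mul_le_mul_of_nonneg_left (le_abs_self _) (apply_nonneg p z)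
  obtain ⟨f, hf, hfp⟩ := f₀.exists_extension_of_le_seminorm_real (ℝ ∙ z) hf₀
  refine ⟨f, ?_, hfp⟩
  simpa [f₀, LinearEquiv.coord_self] using hf ⟨z, Submodule.mem_span_singleton_self z⟩

lemma exists_dual_mem_smul_absConvexHull [TopologicalSpace E] [IsTopologicalAddGroup E]
    [ContinuousSMul ℝ E] [T2Space E] [FiniteDimensional ℝ E] {s : Set E} (hne : s.Nonempty)
    (hs : IsCompact s) (hspan : Submodule.span ℝ s = ⊤) (z : E) :
    ∃ f : Dual ℝ E, (∀ x ∈ s, |f x| ≤ 1) ∧ 0 ≤ f z ∧ ∃ w ∈ absConvexHull ℝ s, f z • w = z := by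
  set B := absConvexHull ℝ s
  have habs : Absorbent ℝ B := absorbent_absConvexHull hne hspan
  have hcompact : IsCompact B := isCompact_absConvexHull hs
  obtain ⟨f, hfz, hf⟩ :=
    exists_dual_eq_seminorm (gaugeSeminorm balanced_absConvexHull convex_absConvexHull habs) z
  rw [gaugeSeminorm_toFun] at hfz
  simp only [gaugeSeminorm_toFun] at hf
  obtain rfl | hz := eq_or_ne z 0
  · exact ⟨0, by simp, by simp, 0, habs.zero_mem, by simp⟩
  have hpos : 0 < f z := hfz ▸ (gauge_pos habs (hcompact.isVonNBounded ℝ)).mpr hz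
  refine ⟨f, fun x hx => (hf x).trans (gauge_le_one_of_mem (subset_absConvexHull hx)), hpos.le,
    (f z)⁻¹ • z, ?_, smul_inv_smul₀ hpos.ne' z⟩
  refine hcompact.isClosed.closure_subset
    (mem_closure_of_gauge_le_one convex_absConvexHull habs.zero_mem habs ?_)
  rw [gauge_smul_of_nonneg (inv_nonneg.mpr hpos.le), smul_eq_mul, ← hfz, inv_mul_cancel₀ hpos.ne']

lemma exists_linearCombination_of_mem_absConvexHull {X : Type*} {Φ : X → E} {z : E}
    (hz : z ∈ absConvexHull ℝ (Set.range Φ)) :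
    ∃ c : X →₀ ℝ, Finsupp.linearCombination ℝ Φ c = z ∧ (c.sum fun _ a => |a|) ≤ 1 := by
  classical
  have hadd (c d : X →₀ ℝ) : ((c + d).sum fun _ a => |a|) ≤
      (c.sum fun _ a => |a|) + d.sum fun _ a => |a| := by
    rw [Finsupp.sum_of_support_subset (c + d) Finsupp.support_add _ (by simp),
      Finsupp.sum_of_support_subset c Finset.subset_union_left _ (by simp),
      Finsupp.sum_of_support_subset d Finset.subset_union_right _ (by simp),
      ← Finset.sum_add_distrib]
    exact Finset.sum_le_sum fun x _ => abs_add_le _ _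
  have hsmul (b : ℝ) (c : X →₀ ℝ) : ((b • c).sum fun _ a => |a|) =
      ‖b‖ * c.sum fun _ a => |a| := by
    rw [Finsupp.sum_smul_index (by simp), Finsupp.mul_sum]
    simp [abs_mul]
  let p : Seminorm ℝ (X →₀ ℝ) := Seminorm.of (fun c => c.sum fun _ a => |a|) hadd hsmul
  have hp (c : X →₀ ℝ) : p c = c.sum fun _ a => |a| := rfl
  obtain ⟨c, hc, rfl⟩ : z ∈ Finsupp.linearCombination ℝ Φ '' p.closedBall 0 1 := by
    rw [← convexHull_union_neg_eq_absConvexHull] at hz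
    refine convexHull_min ?_ ((p.convex_closedBall 0 1).linear_image _) hz
    rintro v (⟨x, rfl⟩ | ⟨x, hx⟩)
    · exact ⟨Finsupp.single x 1, by simp [p.mem_closedBall_zero, hp], by simp⟩
    · exact ⟨Finsupp.single x (-1), by simp [p.mem_closedBall_zero, hp, -Finsupp.single_neg],
        by simp [hx]⟩
  exact ⟨c, rfl, by rwa [p.mem_closedBall_zero, hp] at hc⟩

/-- Strong duality for writing `z` as a combination of the points `Φ x` of least total mass: by
weak duality, a functional `f` with `|f| ≤ 1` on `Φ` bounds the mass of every combination from below
by `f z`, and the combination with coefficients `c` attains this bound. -/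
structure IsDualCertificate {X : Type*} (Φ : X → E) (z : E) (f : Dual ℝ E) (c : X →₀ ℝ) : Prop where
  abs_apply_le_one (x : X) : |f (Φ x)| ≤ 1
  linearCombination_eq : Finsupp.linearCombination ℝ Φ c = z
  sum_abs_le : (c.sum fun _ a => |a|) ≤ f z

lemma exists_isDualCertificate [TopologicalSpace E] [IsTopologicalAddGroup E]
    [ContinuousSMul ℝ E] [T2Space E] [FiniteDimensional ℝ E] {X : Type*} [TopologicalSpace X]
    [CompactSpace X] [Nonempty X] {Φ : X → E} (hΦ : Continuous Φ) {z : E}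
    (hz : z ∈ Submodule.span ℝ (Set.range Φ)) :
    ∃ (f : Dual ℝ E) (c : X →₀ ℝ), IsDualCertificate Φ z f c := by
  let V := Submodule.span ℝ (Set.range Φ)
  let Ψ : X → V := Set.codRestrict Φ V fun x => Submodule.subset_span ⟨x, rfl⟩
  have hΨ : IsCompact (Set.range Ψ) := isCompact_range (hΦ.codRestrict _)
  have hspan : Submodule.span ℝ (Set.range Ψ) = ⊤ := by
    rw [← Submodule.span_span_coe_preimage]
    congr 1
    ext v
    simp [Ψ, Subtype.ext_iff]
  obtain ⟨g, hg, hg0, w, hw, hwz⟩ :=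
    exists_dual_mem_smul_absConvexHull (Set.range_nonempty Ψ) hΨ hspan ⟨z, hz⟩
  obtain ⟨f, rfl⟩ := LinearMap.exists_extend g
  obtain ⟨c, hcw, hc⟩ := exists_linearCombination_of_mem_absConvexHull hw
  refine ⟨f, f z • c, fun x => hg _ ⟨x, rfl⟩, ?_, ?_⟩
  · have hcz : Finsupp.linearCombination ℝ Φ c = w := by
      rw [← hcw]
      exact (Finsupp.apply_linearCombination ℝ V.subtype Ψ c).symm
    rw [map_smul, hcz]
    exact congrArg Subtype.val hwz
  · rw [Finsupp.sum_smul_index (by simp)]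
    simp_rw [abs_mul, abs_of_nonneg (show 0 ≤ f z from hg0)]
    rw [← Finsupp.mul_sum]
    exact mul_le_of_le_one_right hg0 hc

section
variable {X : Type*} {Φ : X → E} {z : E} {f : Dual ℝ E} {c : X →₀ ℝ}

lemma IsDualCertificate.mul_apply_eq_abs (h : IsDualCertificate Φ z f c) (x : X) :
    c x * f (Φ x) = |c x| := by
  have hle (x : X) : c x * f (Φ x) ≤ |c x| := by
    refine (le_abs_self _).trans ?_
    rw [abs_mul]
    exact mul_le_of_le_one_right (abs_nonneg _) (h.abs_apply_le_one x)
  have hsum : ∑ x ∈ c.support, c x * f (Φ x) = ∑ x ∈ c.support, |c x| := by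
    refine (Finset.sum_le_sum fun x _ => hle x).antisymm (h.sum_abs_le.trans_eq ?_)
    simp [← h.linearCombination_eq, Finsupp.linearCombination_apply, Finsupp.sum]
  by_cases hx : x ∈ c.support
  · exact (Finset.sum_eq_sum_iff_of_le fun x _ => hle x).mp hsum x hx
  · simp [Finsupp.notMem_support_iff.mp hx]

lemma IsDualCertificate.apply_eq_one (h : IsDualCertificate Φ z f c) {x : X} (hx : 0 < c x) :
    f (Φ x) = 1 :=
  mul_left_cancel₀ hx.ne' (by rw [h.mul_apply_eq_abs, abs_of_pos hx, mul_one])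

lemma IsDualCertificate.apply_eq_neg_one (h : IsDualCertificate Φ z f c) {x : X} (hx : c x < 0) :
    f (Φ x) = -1 :=
  mul_left_cancel₀ hx.ne (by rw [h.mul_apply_eq_abs, abs_of_neg hx, mul_neg_one])

lemma IsDualCertificate.support_subset (h : IsDualCertificate Φ z f c) {s : Finset X}
    (hs : ∀ x, |f (Φ x)| = 1 → x ∈ s) : c.support ⊆ s := by
  intro x hx
  obtain hneg | hpos := lt_or_gt_of_ne (Finsupp.mem_support_iff.mp hx)
  · exact hs x (by rw [h.apply_eq_neg_one hneg, abs_neg, abs_one])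
  · exact hs x (by rw [h.apply_eq_one hpos, abs_one])

end

end

section
open VectorMeasure

variable {α F G : Type*} [MeasurableSpace α] [NormedAddCommGroup F] [NormedAddCommGroup G]
  [NormedSpace ℝ G]

/-- The purely atomic vector measure with finitely many atoms, of mass `c x` at `x`. -/
def atomicMeasure (c : α →₀ F) : VectorMeasure α F :=
  c.sum fun x a => VectorMeasure.dirac x a

lemma variation_atomicMeasure_le (c : α →₀ F) :
    (atomicMeasure c).variation.real Set.univ ≤ c.sum fun _ a => ‖a‖ := by
  refine ENNReal.toReal_le_of_le_ofReal (Finsupp.sum_nonneg fun _ _ => norm_nonneg _) ?_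
  rw [Finsupp.sum, ENNReal.ofReal_sum_of_nonneg fun x _ => norm_nonneg _]
  refine (variation_finsetSum_le _ _ _).trans_eq ?_
  simp [variation_dirac]

lemma integral_atomicMeasure [MeasurableSingletonClass α] [CompleteSpace G]
    (h : α → G) (c : α →₀ ℝ) :
    ∫ᵛ x, h x ∂<•(atomicMeasure c) = c.sum fun x a => a • h x := by
  rw [atomicMeasure, Finsupp.sum, integral_finsetSum_vectorMeasure]
  · simp [Finsupp.sum]
  · intro x _
    rw [VectorMeasure.Integrable, variation_dirac]
    exact (integrable_dirac (by simp)).smul_measure enorm_ne_top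

lemma eq_atomicMeasure_of_ae_mem [MeasurableSingletonClass α] {w : VectorMeasure α F}
    [IsFiniteMeasure w.variation] {X : Finset α} (hX : ∀ᵐ x ∂w.variation, x ∈ X) :
    ∃ c : α →₀ F, ↑c.support ⊆ (X : Set α) ∧ w = atomicMeasure c := by
  classical
  refine ⟨Finsupp.indicator X fun x _ => w {x}, Finsupp.support_indicator_subset _ _, ?_⟩
  ext A hA
  have hatoms : w (X.filter (· ∈ A)) = ∑ x ∈ X.filter (· ∈ A), w {x} := by
    rw [← of_biUnion_finset (fun x _ y _ hxy => by simpa using hxy)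
      fun x _ => MeasurableSet.singleton x]
    exact congrArg w (Set.biUnion_of_singleton _).symm
  have hdiff : w (A \ X.filter (· ∈ A)) = 0 := by
    have hnull : w.variation (A \ X.filter (· ∈ A)) = 0 :=
      measure_mono_null (fun x hx hxX => hx.2 (Finset.mem_filter.mpr ⟨hxX, hx.1⟩)) (ae_iff.mp hX)
    simpa only [Measure.real, hnull, ENNReal.toReal_zero, norm_le_zero_iff] using
      norm_measure_le_variation (μ := w) (E := A \ X.filter (· ∈ A))
  rw [← of_add_of_sdiff (Finset.measurableSet _) hA (fun x hx => (Finset.mem_filter.mp hx).2),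
    hdiff, add_zero, hatoms, atomicMeasure, Finsupp.sum_indicator_index _ (by simp),
    Finset.sum_filter]
  rw [FunLike.coe_sum, Finset.sum_apply]
  refine Finset.sum_congr rfl fun x _ => ?_
  split_ifs with hxA <;> simp [hA, hxA]

variable {w : SignedMeasure α} {h : α → G}

instance isFiniteMeasure_variation (w : SignedMeasure α) : IsFiniteMeasure w.variation := by
  rw [← SignedMeasure.totalVariation_eq_variation, SignedMeasure.totalVariation]
  infer_instance

lemma integrable_variation_iff {H : Type*} [NormedAddCommGroup H] {h : α → H} :
    Integrable h w.variation ↔ Integrable h w.toJordanDecomposition.posPart ∧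
      Integrable h w.toJordanDecomposition.negPart := by
  rw [← SignedMeasure.totalVariation_eq_variation, SignedMeasure.totalVariation,
    integrable_add_measure]

lemma integral_eq_integral_posPart_sub_integral_negPart (hh : Integrable h w.variation) :
    ∫ᵛ x, h x ∂<•w = ∫ x, h x ∂w.toJordanDecomposition.posPart
      - ∫ x, h x ∂w.toJordanDecomposition.negPart := by
  rw [integrable_variation_iff] at hh
  conv_lhs => rw [← w.toSignedMeasure_toJordanDecomposition, JordanDecomposition.toSignedMeasure]
  rw [integral_sub_vectorMeasure, integral_toSignedMeasure, integral_toSignedMeasure]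
  · simpa only [VectorMeasure.Integrable, Measure.variation_toSignedMeasure] using hh.1
  · simpa only [VectorMeasure.Integrable, Measure.variation_toSignedMeasure] using hh.2

lemma vectorMeasureIntegral_clm_comp [CompleteSpace G] {G' : Type*} [NormedAddCommGroup G']
    [NormedSpace ℝ G'] [CompleteSpace G'] (L : G →L[ℝ] G') (hh : Integrable h w.variation) :
    ∫ᵛ x, L (h x) ∂<•w = L (∫ᵛ x, h x ∂<•w) := by
  have hparts := integrable_variation_iff.mp hh
  rw [integral_eq_integral_posPart_sub_integral_negPart (L.integrable_comp hh),
    integral_eq_integral_posPart_sub_integral_negPart hh, map_sub,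
    L.integral_comp_comm hparts.1, L.integral_comp_comm hparts.2]

lemma norm_vectorMeasureIntegral_le : ‖∫ᵛ x, h x ∂<•w‖ ≤ ∫ x, ‖h x‖ ∂w.variation := by
  refine VectorMeasure.norm_integral_le_integral_norm.trans
    (mul_le_of_le_one_left (by positivity) ?_)
  rw [ContinuousLinearMap.opNorm_flip]
  exact ContinuousLinearMap.opNorm_lsmul_le

lemma norm_vectorMeasureIntegral_le_variation (hh : Integrable h w.variation)
    (h1 : ∀ x, ‖h x‖ ≤ 1) : ‖∫ᵛ x, h x ∂<•w‖ ≤ w.variation.real Set.univ :=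
  norm_vectorMeasureIntegral_le.trans <| by
    simpa using integral_mono hh.norm (integrable_const 1) h1

lemma ae_norm_eq_one_of_variation_le_norm_integral (hh : Integrable h w.variation)
    (h1 : ∀ x, ‖h x‖ ≤ 1) (hw : w.variation.real Set.univ ≤ ‖∫ᵛ x, h x ∂<•w‖) :
    ∀ᵐ x ∂w.variation, ‖h x‖ = 1 := by
  have hnonneg : 0 ≤ fun x => 1 - ‖h x‖ := fun x => sub_nonneg.mpr (h1 x)
  have hint : Integrable (fun x => 1 - ‖h x‖) w.variation := (integrable_const 1).sub hh.norm
  have hzero : ∫ x, (1 - ‖h x‖) ∂w.variation = 0 := by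
    refine le_antisymm ?_ (integral_nonneg hnonneg)
    rw [integral_sub (integrable_const 1) hh.norm, sub_nonpos]
    simpa using hw.trans norm_vectorMeasureIntegral_le
  filter_upwards [(integral_eq_zero_iff_of_nonneg hnonneg hint).mp hzero] with x hx
  exact (sub_eq_zero.mp hx).symm
end

section

/-- The curve `t ↦ (e^{i(j-K)t})_{0 ≤ j ≤ 2K}` formed by the characters of degree at most `K`. -/
def momentCurve (K : ℕ) (t : Circle2pi) : Fin (2 * K + 1) → ℂ :=
  fun j => fourier ((j : ℤ) - K) t

/-- The data `y`, reindexed like `momentCurve`: the entry at `j` belongs to the character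
`e^{-i(K-j)t}` defining the Fourier coefficient of index `K - j`. -/
def momentVector (K : ℕ) (y : ℤ → ℂ) : Fin (2 * K + 1) → ℂ :=
  fun j => y (K - j)

variable {K : ℕ}

lemma continuous_momentCurve : Continuous (momentCurve K) :=
  continuous_pi fun _ => (fourier _).continuous

lemma integrable_momentCurve (μ : Measure Circle2pi) [IsFiniteMeasure μ] :
    Integrable (momentCurve K) μ :=
  continuous_momentCurve.integrable_of_hasCompactSupport (HasCompactSupport.of_compactSpace _)

lemma rev_sub_eq_neg (j : Fin (2 * K + 1)) : ((j.rev : ℕ) : ℤ) - K = -((j : ℤ) - K) := by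
  rw [Fin.val_rev]
  omega

lemma star_momentCurve (t : Circle2pi) (j : Fin (2 * K + 1)) :
    momentCurve K t j.rev = star (momentCurve K t j) := by
  rw [momentCurve, momentCurve, rev_sub_eq_neg, fourier_neg]
  rfl

instance infinite_circle2pi : Infinite Circle2pi := by
  rw [(AddCircle.equivIco (2 * π) 0).infinite_iff]
  exact (Set.Ico_infinite (by linarith [Real.pi_pos])).to_subtype

lemma fourier_eq_fourier_one_pow (n : ℕ) (t : Circle2pi) :
    (fourier n t : ℂ) = fourier 1 t ^ n := by
  simp only [fourier_apply, natCast_zsmul, one_smul, AddCircle.toCircle_nsmul, Circle.coe_pow]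

lemma fourier_one_injective : Function.Injective fun t : Circle2pi => (fourier 1 t : ℂ) := by
  simp only [fourier_one]
  exact Circle.coe_injective.comp (AddCircle.injective_toCircle Real.two_pi_pos.ne')

lemma det_momentCurve_ne_zero {t : Fin (2 * K + 1) → Circle2pi} (ht : Function.Injective t) :
    (Matrix.of fun i => momentCurve K (t i)).det ≠ 0 := by
  have hfactor : (Matrix.of fun i => momentCurve K (t i)) = Matrix.of fun i j =>
      fourier (-(K : ℤ)) (t i) * vandermonde (fun i => (fourier 1 (t i) : ℂ)) i j := by
    ext i j
    rw [of_apply, of_apply, vandermonde_apply, ← fourier_eq_fourier_one_pow, ← fourier_add,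
      momentCurve, neg_add_eq_sub]
  rw [hfactor, det_mul_column]
  refine mul_ne_zero (Finset.prod_ne_zero_iff.mpr fun i _ => ?_)
    (det_vandermonde_ne_zero_iff.mpr (fourier_one_injective.comp ht))
  rw [fourier_apply]
  exact Circle.coe_ne_zero _

lemma linearIndepOn_momentCurve {X : Finset Circle2pi} (hX : X.card ≤ 2 * K + 1) :
    LinearIndepOn ℝ (momentCurve K) (X : Set Circle2pi) := by
  obtain ⟨Y, hXY, hY⟩ := Infinite.exists_superset_card_eq X _ hX
  refine LinearIndepOn.mono ?_ (Finset.coe_subset.mpr hXY)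
  let e : Fin (2 * K + 1) ≃ Y := (Y.equivFinOfCardEq hY).symm
  have hrows : LinearIndependent ℂ fun i => momentCurve K (e i) :=
    linearIndependent_rows_of_det_ne_zero
      (det_momentCurve_ne_zero (Subtype.val_injective.comp e.injective))
  have hY : LinearIndependent ℂ fun x : Y => momentCurve K x :=
    (linearIndependent_equiv e).mp hrows
  exact hY.restrict_scalars (by simpa using Complex.ofReal_injective)

lemma encard_momentCurve_dotProduct_eq_zero_le {b : Fin (2 * K + 1) → ℂ} (hb : b ≠ 0) :
    {t | momentCurve K t ⬝ᵥ b = 0}.encard ≤ (2 * K : ℕ) := by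
  contrapose! hb
  obtain ⟨Y, hY, hcard⟩ := Set.exists_subset_encard_eq (Order.add_one_le_of_lt hb)
  lift Y to Finset Circle2pi using Set.finite_of_encard_eq_coe (k := 2 * K + 1) hcard
  rw [Set.encard_coe_eq_coe_finsetCard] at hcard
  let e : Fin (2 * K + 1) ≃ Y := (Y.equivFinOfCardEq (mod_cast hcard)).symm
  refine eq_zero_of_mulVec_eq_zero
    (det_momentCurve_ne_zero (Subtype.val_injective.comp e.injective)) ?_
  ext i
  exact hY (e i).2

lemma exists_dotProduct_eq_dual {n : ℕ} (f : Module.Dual ℝ (Fin n → ℂ)) :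
    ∃ b : Fin n → ℂ, ∀ z : Fin n → ℂ, (∀ j, z j.rev = star (z j)) → z ⬝ᵥ b = f z := by
  let c (j : Fin n) : ℂ := f (Pi.single j 1) - f (Pi.single j I) * I
  have hf (z : Fin n → ℂ) : f z = ∑ j, (z j * c j).re := by
    conv_lhs => rw [← Finset.univ_sum_single z, map_sum]
    refine Finset.sum_congr rfl fun j _ => ?_
    have hsingle : Pi.single j (z j) =
        (z j).re • (Pi.single j 1 : Fin n → ℂ) + (z j).im • (Pi.single j I : Fin n → ℂ) := by
      simp_rw [← Pi.single_smul, ← Pi.single_add, real_smul, mul_one, re_add_im]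
    rw [hsingle, map_add, map_smul, map_smul]
    simp [c]
  -- `f z` is the real part of `∑ j, z j * c j`; conjugating this sum reverses the order of `z`.
  refine ⟨fun j => (c j + star (c j.rev)) / 2, fun z hz => ?_⟩
  have hconj : ∑ j, z j * star (c j.rev) = ∑ j, star (z j * c j) := by
    rw [← Equiv.sum_comp Fin.revPerm]
    simp [hz]
  rw [hf, ← Complex.re_sum, re_eq_add_conj, map_sum]
  simp only [dotProduct, mul_div_assoc', mul_add]
  rw [← Finset.sum_div, Finset.sum_add_distrib, hconj]
  rfl

lemma hasDerivAt_momentCurve (s : ℝ) :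
    HasDerivAt (fun s : ℝ => momentCurve K (s : Circle2pi))
      (fun j => I * ((j : ℤ) - K : ℤ) * momentCurve K s j) s := by
  refine hasDerivAt_pi.mpr fun j => (hasDerivAt_fourier (2 * π) ((j : ℤ) - K) s).congr_deriv ?_
  rw [momentCurve]
  push_cast
  field_simp [Real.pi_ne_zero]

lemma constant_or_encard_contact_le {f : Module.Dual ℝ (Fin (2 * K + 1) → ℂ)}
    (hf : ∀ t, |f (momentCurve K t)| ≤ 1) :
    (∃ κ, ∀ t, f (momentCurve K t) = κ) ∨ {t | |f (momentCurve K t)| = 1}.encard ≤ (2 * K : ℕ) := by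
  let D (t : Circle2pi) (j : Fin (2 * K + 1)) : ℂ := I * ((j : ℤ) - K : ℤ) * momentCurve K t j
  have hderiv (s : ℝ) : HasDerivAt (fun s : ℝ => f (momentCurve K s)) (f (D s)) s :=
    f.toContinuousLinearMap.hasFDerivAt.comp_hasDerivAt s (hasDerivAt_momentCurve s)
  obtain ⟨b, hb⟩ := exists_dotProduct_eq_dual f
  let b' : Fin (2 * K + 1) → ℂ := fun j => I * ((j : ℤ) - K : ℤ) * b j
  have hD (t : Circle2pi) : momentCurve K t ⬝ᵥ b' = f (D t) := by
    rw [← hb (D t) fun j => ?_]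
    · exact Finset.sum_congr rfl fun j _ => by ring
    · simp only [D, rev_sub_eq_neg, star_momentCurve, star_mul', star_def, conj_I,
        map_intCast, Int.cast_neg, mul_neg, neg_mul]
  by_cases hb' : b' = 0
  · left
    refine ⟨f (momentCurve K (0 : ℝ)), fun t => ?_⟩
    obtain ⟨s, rfl⟩ := QuotientAddGroup.mk_surjective t
    have hzero (s : ℝ) : f (D s) = 0 := by
      rw [← Complex.ofReal_eq_zero, ← hD, hb', dotProduct_zero]
    exact is_const_of_deriv_eq_zero (fun s => (hderiv s).differentiableAt)
      (fun s => (hderiv s).deriv.trans (hzero s)) s 0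
  · right
    refine (Set.encard_le_encard fun t ht => ?_).trans
      (encard_momentCurve_dotProduct_eq_zero_le hb')
    obtain ⟨s, rfl⟩ := QuotientAddGroup.mk_surjective t
    refine (hD s).trans (Complex.ofReal_eq_zero.mpr ?_)
    obtain h1 | h1 := eq_or_eq_neg_of_abs_eq ht
    · refine IsLocalMax.hasDerivAt_eq_zero (.of_forall fun r => ?_) (hderiv s)
      exact (abs_le.mp (hf r)).2.trans h1.ge
    · refine IsLocalMin.hasDerivAt_eq_zero (.of_forall fun r => ?_) (hderiv s)
      exact h1.le.trans (abs_le.mp (hf r)).1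

lemma mem_span_range_momentCurve {z : Fin (2 * K + 1) → ℂ} (hz : ∀ j, z j.rev = star (z j)) :
    z ∈ Submodule.span ℝ (Set.range (momentCurve K)) := by
  by_contra hmem
  obtain ⟨f, hfz, hf⟩ := Submodule.exists_le_ker_of_notMem hmem
  obtain ⟨b, hb⟩ := exists_dotProduct_eq_dual f
  have hvanish (t : Circle2pi) : momentCurve K t ⬝ᵥ b = 0 := by
    rw [hb _ (star_momentCurve t), LinearMap.mem_ker.mp (hf (Submodule.subset_span ⟨t, rfl⟩)),
      Complex.ofReal_zero]
  have hb0 : b = 0 := by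
    by_contra hne
    have hle := encard_momentCurve_dotProduct_eq_zero_le hne
    simp only [hvanish, Set.ofPred_true, Set.encard_univ, ENat.card_eq_top_of_infinite] at hle
    exact ENat.natCast_ne_top _ (top_le_iff.mp hle)
  exact hfz (by simpa [hb0] using (hb z hz).symm)

end

section

variable {K : ℕ} {y : ℤ → ℂ} {w : SignedMeasure Circle2pi}

lemma tvNorm_eq_variation (w : SignedMeasure Circle2pi) : tvNorm w = w.variation.real Set.univ := by
  rw [tvNorm, SignedMeasure.totalVariation_eq_variation, Measure.real]

lemma integral_momentCurve (w : SignedMeasure Circle2pi) :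
    ∫ᵛ t, momentCurve K t ∂<•w = momentVector K (sFourierCoeff w) := by
  rw [integral_eq_integral_posPart_sub_integral_negPart (integrable_momentCurve _)]
  ext j
  rw [Pi.sub_apply, eval_integral (integrable_momentCurve _).eval,
    eval_integral (integrable_momentCurve _).eval, momentVector, sFourierCoeff, neg_sub]
  rfl

lemma momentVector_eq_iff {u v : ℤ → ℂ} :
    momentVector K u = momentVector K v ↔ ∀ k : ℤ, |k| ≤ (K : ℤ) → u k = v k := by
  constructor
  · intro h k hk
    rw [abs_le] at hk
    have hj := congrFun h ⟨(K - k).toNat, by omega⟩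
    have hk' : (K : ℤ) - (K - k).toNat = k := by omega
    simpa only [momentVector, hk'] using hj
  · intro h
    ext j
    exact h _ (abs_le.mpr (by omega))

lemma feasible_iff_integral_momentCurve_eq :
    Feasible K y w ↔ ∫ᵛ t, momentCurve K t ∂<•w = momentVector K y := by
  rw [integral_momentCurve, momentVector_eq_iff, Feasible]

lemma integrable_dual_momentCurve (f : Module.Dual ℝ (Fin (2 * K + 1) → ℂ))
    (μ : Measure Circle2pi) [IsFiniteMeasure μ] : Integrable (fun t => f (momentCurve K t)) μ :=
  f.toContinuousLinearMap.integrable_comp (integrable_momentCurve μ)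

lemma integral_dual_momentCurve (f : Module.Dual ℝ (Fin (2 * K + 1) → ℂ))
    (hw : Feasible K y w) : ∫ᵛ t, f (momentCurve K t) ∂<•w = f (momentVector K y) := by
  rw [← feasible_iff_integral_momentCurve_eq.mp hw]
  exact vectorMeasureIntegral_clm_comp f.toContinuousLinearMap (integrable_momentCurve _)

lemma star_momentVector (hy : ∀ k : ℤ, |k| ≤ (K : ℤ) → y (-k) = starRingEnd ℂ (y k))
    (j : Fin (2 * K + 1)) : momentVector K y j.rev = star (momentVector K y j) := by
  have hrev : (K : ℤ) - (j.rev : ℕ) = -(K - j) := by linarith [rev_sub_eq_neg j]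
  rw [momentVector, momentVector, hrev]
  exact hy _ (abs_le.mpr (by omega))

lemma posSemidef_Ty_of_linearCombination_eq {c : Circle2pi →₀ ℝ} (hc : 0 ≤ c)
    (h : Finsupp.linearCombination ℝ (momentCurve K) c = momentVector K y) :
    (Ty K y).PosSemidef := by
  let v (x : Circle2pi) : Fin (K + 1) → ℂ := fun i => fourier i x
  have hTy : Ty K y = ∑ x ∈ c.support, c x • vecMulVec (v x) (star (v x)) := by
    ext i j
    obtain ⟨m, hm⟩ : ∃ m : Fin (2 * K + 1), (K : ℤ) - (m : ℕ) = j - i :=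
      ⟨⟨(K + i - j : ℤ).toNat, by omega⟩, by dsimp only; omega⟩
    have hcurve (x : Circle2pi) : momentCurve K x m = vecMulVec (v x) (star (v x)) i j := by
      rw [momentCurve, ← neg_sub, hm, neg_sub, sub_eq_add_neg, fourier_add, fourier_neg]
      rfl
    rw [Ty, of_apply, ← hm]
    refine (congrFun h m).symm.trans ?_
    rw [Finsupp.linearCombination_apply, Finsupp.sum, Finset.sum_apply, Matrix.sum_apply]
    exact Finset.sum_congr rfl fun x _ => congrArg (c x • ·) (hcurve x)
  rw [hTy]
  exact posSemidef_sum _ fun x _ => (posSemidef_vecMulVec_self_star _).smul (hc x)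

lemma exists_neg_of_not_posSemidef_Ty {c : Circle2pi →₀ ℝ}
    (h : Finsupp.linearCombination ℝ (momentCurve K) c = momentVector K y)
    (hT : ¬ (Ty K y).PosSemidef) : ∃ x, c x < 0 := by
  contrapose! hT
  exact posSemidef_Ty_of_linearCombination_eq hT h

lemma exists_pos_of_not_posSemidef_neg_Ty {c : Circle2pi →₀ ℝ}
    (h : Finsupp.linearCombination ℝ (momentCurve K) c = momentVector K y)
    (hT : ¬ (-Ty K y).PosSemidef) : ∃ x, 0 < c x := by
  have hneg : Finsupp.linearCombination ℝ (momentCurve K) (-c) = momentVector K (-y) := by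
    rw [map_neg, h]
    rfl
  obtain ⟨x, hx⟩ := exists_neg_of_not_posSemidef_Ty hneg hT
  exact ⟨x, neg_neg_iff_pos.mp hx⟩

namespace IsDualCertificate

variable {f : Module.Dual ℝ (Fin (2 * K + 1) → ℂ)} {c : Circle2pi →₀ ℝ}

lemma exists_contact_finset {z : Fin (2 * K + 1) → ℂ}
    (h : IsDualCertificate (momentCurve K) z f c) (hpos : ∃ x, 0 < c x) (hneg : ∃ x, c x < 0) :
    ∃ X : Finset Circle2pi, X.card ≤ 2 * K ∧ ∀ t, |f (momentCurve K t)| = 1 → t ∈ X := by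
  obtain ⟨p, hp⟩ := hpos
  obtain ⟨n, hn⟩ := hneg
  obtain ⟨κ, hκ⟩ | hle := constant_or_encard_contact_le h.abs_apply_le_one
  · have hp' := h.apply_eq_one hp
    have hn' := h.apply_eq_neg_one hn
    rw [hκ] at hp' hn'
    linarith
  · have hfin := Set.finite_of_encard_le_coe hle
    refine ⟨hfin.toFinset, ?_, fun t ht => hfin.mem_toFinset.mpr ht⟩
    rwa [hfin.encard_eq_coe_toFinset_card, Nat.cast_le] at hle

lemma feasible_atomicMeasure (h : IsDualCertificate (momentCurve K) (momentVector K y) f c) :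
    Feasible K y (atomicMeasure c) := by
  rw [feasible_iff_integral_momentCurve_eq, integral_atomicMeasure, ← h.linearCombination_eq]
  rfl

lemma tvNorm_atomicMeasure_le (h : IsDualCertificate (momentCurve K) (momentVector K y) f c) :
    tvNorm (atomicMeasure c) ≤ f (momentVector K y) := by
  rw [tvNorm_eq_variation]
  exact (variation_atomicMeasure_le c).trans h.sum_abs_le

lemma isBPCSolution_atomicMeasure
    (h : IsDualCertificate (momentCurve K) (momentVector K y) f c) :
    IsBPCSolution K y (atomicMeasure c) := by
  refine ⟨h.feasible_atomicMeasure, fun v hv => h.tvNorm_atomicMeasure_le.trans ?_⟩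
  rw [← integral_dual_momentCurve f hv, tvNorm_eq_variation]
  exact (le_abs_self _).trans (norm_vectorMeasureIntegral_le_variation
    (integrable_dual_momentCurve f _) h.abs_apply_le_one)

lemma ae_abs_eq_one (h : IsDualCertificate (momentCurve K) (momentVector K y) f c)
    (hw : IsBPCSolution K y w) : ∀ᵐ t ∂w.variation, |f (momentCurve K t)| = 1 := by
  have hle : w.variation.real Set.univ ≤ ‖∫ᵛ t, f (momentCurve K t) ∂<•w‖ := by
    rw [integral_dual_momentCurve f hw.1, ← tvNorm_eq_variation]
    exact ((hw.2 _ h.feasible_atomicMeasure).trans h.tvNorm_atomicMeasure_le).trans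
      (le_abs_self _)
  exact ae_norm_eq_one_of_variation_le_norm_integral (h := fun t => f (momentCurve K t))
    (integrable_dual_momentCurve f _) h.abs_apply_le_one hle

lemma eq_atomicMeasure {X : Finset Circle2pi} (hcard : X.card ≤ 2 * K + 1)
    (h : IsDualCertificate (momentCurve K) (momentVector K y) f c)
    (hX : ∀ t, |f (momentCurve K t)| = 1 → t ∈ X) (hw : IsBPCSolution K y w) :
    w = atomicMeasure c := by
  obtain ⟨d, hd, rfl⟩ := eq_atomicMeasure_of_ae_mem ((h.ae_abs_eq_one hw).mono hX)
  have hmoments : Finsupp.linearCombination ℝ (momentCurve K) d =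
      Finsupp.linearCombination ℝ (momentCurve K) c := by
    rw [h.linearCombination_eq, ← feasible_iff_integral_momentCurve_eq.mp hw.1,
      integral_atomicMeasure]
    rfl
  rw [linearIndepOn_iffₛ.mp (linearIndepOn_momentCurve hcard) d hd c
    (Finset.coe_subset.mpr (h.support_subset hX)) hmoments]

end IsDualCertificate

lemma exists_fin_atoms (c : Circle2pi →₀ ℝ) (hpos : ∃ x, 0 < c x) (hneg : ∃ x, c x < 0) :
    ∃ (x : Fin c.support.card → Circle2pi) (a : Fin c.support.card → ℝ), Function.Injective x ∧
      (∀ i, a i ≠ 0) ∧ (∃ i, 0 < a i) ∧ (∃ j, a j < 0) ∧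
      atomicMeasure c = ∑ i, a i • diracSM (x i) := by
  let e := c.support.equivFin.symm
  have hmem {x : Circle2pi} (hx : c x ≠ 0) : ∃ i, (e i : Circle2pi) = x :=
    ⟨e.symm ⟨x, Finsupp.mem_support_iff.mpr hx⟩, by simp⟩
  refine ⟨fun i => e i, fun i => c (e i), Subtype.val_injective.comp e.injective,
    fun i => Finsupp.mem_support_iff.mp (e i).2, ?_, ?_, ?_⟩
  · obtain ⟨x, hx⟩ := hpos
    obtain ⟨i, rfl⟩ := hmem hx.ne'
    exact ⟨i, hx⟩
  · obtain ⟨x, hx⟩ := hneg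
    obtain ⟨i, rfl⟩ := hmem hx.ne
    exact ⟨i, hx⟩
  · rw [e.sum_comp fun x : c.support => c x • diracSM x,
      Finset.sum_coe_sort c.support fun x => c x • diracSM x]
    refine Finset.sum_congr rfl fun x _ => ?_
    ext A hA
    by_cases hx : x ∈ A <;> simp [diracSM, hA, hx, Measure.real]

end

/-- If `T_y` is neither positive semidefinite nor negative semidefinite (equivalently, it
has at least one positive and one negative eigenvalue), then (BPC) has a unique solution,
composed of at most `2 K_c` Dirac masses with at least one positive and one negative
weight. -/
theorem unique_sparse_solution_of_Ty_indefinite (Kc : ℕ) (hKc : 1 ≤ Kc) (y : ℤ → ℂ)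
    (hsym : ∀ k : ℤ, |k| ≤ (Kc : ℤ) → y (-k) = starRingEnd ℂ (y k))
    (hnpos : ¬ (Ty Kc y).PosSemidef) (hnneg : ¬ (-(Ty Kc y)).PosSemidef) :
    ∃ w' : MeasureTheory.SignedMeasure Circle2pi,
      IsBPCSolution Kc y w' ∧
      (∀ w : MeasureTheory.SignedMeasure Circle2pi, IsBPCSolution Kc y w → w = w') ∧
      ∃ (N : ℕ) (x : Fin N → Circle2pi) (a : Fin N → ℝ),
        1 ≤ N ∧ N ≤ 2 * Kc ∧ Function.Injective x ∧ (∀ i, a i ≠ 0) ∧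
        (∃ i, 0 < a i) ∧ (∃ j, a j < 0) ∧
        w' = ∑ i, a i • diracSM (x i) := by
  obtain ⟨f, c, h⟩ := exists_isDualCertificate continuous_momentCurve
    (mem_span_range_momentCurve (star_momentVector hsym))
  have hneg := exists_neg_of_not_posSemidef_Ty h.linearCombination_eq hnpos
  have hpos := exists_pos_of_not_posSemidef_neg_Ty h.linearCombination_eq hnneg
  obtain ⟨X, hcard, hX⟩ := h.exists_contact_finset hpos hneg
  have hN : c.support.card ≤ 2 * Kc := (Finset.card_le_card (h.support_subset hX)).trans hcard
  obtain ⟨x, a, hx, ha, hapos, haneg, hc⟩ := exists_fin_atoms c hpos hneg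
  exact ⟨atomicMeasure c, h.isBPCSolution_atomicMeasure,
    fun w hw => h.eq_atomicMeasure (Nat.le_succ_of_le hcard) hX hw,
    c.support.card, x, a, Fin.pos hapos.choose, hN, hx, ha, hapos, haneg, hc⟩
end
end

section
/- If the Hermitian Toeplitz matrix T_y is positive definite, then the set of solutions of (BPC) of the form Σ_{i=1}^{K_c+1} a_i δ_{x_i} with strictly positive weights a_i and pairwise distinct x_i ∈ 𝕋 is uncountable; in fact, for every t ∈ 𝕋 there exists such a solution having t among its atoms. -/
open MeasureTheory Complex Real Matrix
open scoped Real ComplexOrder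

noncomputable section

/-!
Write the positive semidefinite Toeplitz matrix `T_y` as the Gram matrix of `e 0, …, e K`. The
Toeplitz property says that the shift `e i ↦ e (i + 1)` preserves inner products, so it extends to
a linear isometry `U` of a space of dimension `K + 1`, and there is room to prescribe one
eigenvalue `z` of `U` on the unit circle. Expanding `⟪e i, e j⟫ = ⟪U ^ i (e 0), U ^ j (e 0)⟫` in
an orthonormal eigenbasis of `U` exhibits `T_y` as the moment matrix of a positive measure carried
by the eigenvalues, one of which is `z`. If `T_y` is positive definite, its determinant forces the
eigenvalues to be distinct and the weights to be positive. A positive feasible measure solves (BPC)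
because its norm is `y 0`, a lower bound for the norm of every feasible measure. Letting `z` vary,
every point of the circle is an atom of some such solution, whereas each solution has only finitely
many atoms.
-/

open scoped NNReal

section Isometry

variable {𝕜 E : Type*} [RCLike 𝕜] [NormedAddCommGroup E] [InnerProductSpace 𝕜 E]

theorem norm_eq_one_of_linearIsometry_apply_eq_smul (U : E →ₗᵢ[𝕜] E) {v : E} {μ : 𝕜}
    (hv₀ : v ≠ 0) (hv : U v = μ • v) : ‖μ‖ = 1 := by
  have hnorm : ‖μ‖ * ‖v‖ = 1 * ‖v‖ := by rw [← norm_smul, ← hv, U.norm_map, one_mul]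
  exact mul_right_cancel₀ (norm_ne_zero_iff.mpr hv₀) hnorm

theorem inner_linearIsometry_apply_of_apply_eq_smul (U : E →ₗᵢ[𝕜] E) {v : E} {μ : 𝕜}
    (hv : U v = μ • v) (x : E) : inner 𝕜 v (U x) = μ * inner 𝕜 v x := by
  rcases eq_or_ne v 0 with rfl | hv₀
  · simp only [inner_zero_left, mul_zero]
  have hμ : μ * starRingEnd 𝕜 μ = 1 := by
    rw [RCLike.mul_conj, norm_eq_one_of_linearIsometry_apply_eq_smul U hv₀ hv]
    norm_num
  calc inner 𝕜 v (U x) = μ * (starRingEnd 𝕜 μ * inner 𝕜 v (U x)) := by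
        rw [← mul_assoc, hμ, one_mul]
    _ = μ * inner 𝕜 (U v) (U x) := by rw [hv, inner_smul_left]
    _ = μ * inner 𝕜 v x := by rw [U.inner_map_map]

theorem orthogonalFamily_eigenspaces_linearIsometry (U : E →ₗᵢ[𝕜] E) :
    OrthogonalFamily 𝕜 (fun μ => Module.End.eigenspace U.toLinearMap μ)
      fun μ => (Module.End.eigenspace U.toLinearMap μ).subtypeₗᵢ := by
  rintro μ ν hμν ⟨x, hx⟩ ⟨y, hy⟩
  have hxy : inner 𝕜 x (U y) = ν * inner 𝕜 x y := by
    rw [show U y = ν • y from Module.End.mem_eigenspace_iff.mp hy, inner_smul_right]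
  rw [inner_linearIsometry_apply_of_apply_eq_smul U (Module.End.mem_eigenspace_iff.mp hx)] at hxy
  exact (mul_eq_mul_right_iff.mp hxy).resolve_left hμν

variable [FiniteDimensional 𝕜 E]

theorem linearIsometry_isSemisimple (U : E →ₗᵢ[𝕜] E) :
    Module.End.IsSemisimple U.toLinearMap := by
  refine Module.End.isSemisimple_iff.mpr fun p hp => ⟨pᗮ, ?_, p.isCompl_orthogonal⟩
  have hmap : p.map U.toLinearMap = p :=
    Submodule.eq_of_le_of_finrank_eq (Submodule.map_le_iff_le_comap.mpr hp)
      (Submodule.equivMapOfInjective U.toLinearMap U.injective p).finrank_eq.symm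
  intro x hx
  rw [Submodule.mem_comap, Submodule.mem_orthogonal]
  intro y hy
  obtain ⟨y', hy', rfl⟩ : y ∈ p.map U.toLinearMap := hmap.symm ▸ hy
  exact (U.inner_map_map y' x).trans (p.inner_right_of_mem_orthogonal hy' hx)

theorem exists_linearIsometry_of_gram_eq {ι : Type*} {f g : ι → E}
    (hfg : gram 𝕜 f = gram 𝕜 g) : ∃ U : E →ₗᵢ[𝕜] E, ∀ i, U (f i) = g i := by
  let F : (ι →₀ 𝕜) →ₗ[𝕜] E := Finsupp.linearCombination 𝕜 f
  let G : (ι →₀ 𝕜) →ₗ[𝕜] E := Finsupp.linearCombination 𝕜 g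
  have hnorm (c : ι →₀ 𝕜) : ‖G c‖ = ‖F c‖ := by
    have hinner (i j : ι) : inner 𝕜 (f i) (f j) = inner 𝕜 (g i) (g j) := congr_fun₂ hfg i j
    simp only [@norm_eq_sqrt_re_inner 𝕜, F, G, Finsupp.linearCombination_apply, Finsupp.sum,
      sum_inner, inner_sum, inner_smul_left, inner_smul_right, hinner]
  obtain ⟨s, hs⟩ := F.rangeRestrict.exists_rightInverse_of_surjective F.range_rangeRestrict
  have hFs (x : F.range) : F (s x) = x := congr_arg Subtype.val (LinearMap.congr_fun hs x)
  let L : F.range →ₗᵢ[𝕜] E := ⟨G ∘ₗ s, fun x => by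
    rw [LinearMap.comp_apply, hnorm, hFs, Submodule.coe_norm]⟩
  have hLF (c : ι →₀ 𝕜) : L (F.rangeRestrict c) = G c := by
    have hF : F (s (F.rangeRestrict c) - c) = 0 := by rw [map_sub, sub_eq_zero]; exact hFs _
    have hG : G (s (F.rangeRestrict c) - c) = 0 := by rw [← norm_eq_zero, hnorm, hF, norm_zero]
    rwa [map_sub, sub_eq_zero] at hG
  refine ⟨L.extend, fun i => ?_⟩
  have hfi : f i = F.rangeRestrict (Finsupp.single i 1) := by simp [F]
  rw [hfi, L.extend_apply, hLF, Finsupp.linearCombination_single, one_smul]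

theorem exists_ne_zero_forall_inner_eq_zero {ι : Type*} [Fintype ι] (v : ι → E)
    (hι : Fintype.card ι < Module.finrank 𝕜 E) : ∃ p ≠ 0, ∀ i, inner 𝕜 (v i) p = 0 := by
  let φ : E →ₗ[𝕜] ι → 𝕜 := LinearMap.pi fun i => innerₛₗ 𝕜 (v i)
  have hker : φ.ker ≠ ⊥ := φ.ker_ne_bot_of_finrank_lt (by rwa [Module.finrank_fintype_fun_eq_card])
  obtain ⟨p, hp, hp₀⟩ := Submodule.exists_mem_ne_zero_of_ne_bot hker
  exact ⟨p, hp₀, congr_fun hp⟩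

theorem exists_linearIsometry_shift {n : ℕ} {e : Fin (n + 1) → E}
    (hn : n < Module.finrank 𝕜 E)
    (he : ∀ i j : Fin n, inner 𝕜 (e i.succ) (e j.succ) = inner 𝕜 (e i.castSucc) (e j.castSucc))
    {z : 𝕜} (hz : ‖z‖ = 1) :
    ∃ U : E →ₗᵢ[𝕜] E, (∀ i : Fin n, U (e i.castSucc) = e i.succ) ∧ ∃ p ≠ 0, U p = z • p := by
  -- Orthogonality of `p` to these `n` vectors makes `p ↦ z • p` compatible with the shift.
  obtain ⟨p, hp₀, hp⟩ := exists_ne_zero_forall_inner_eq_zero (𝕜 := 𝕜)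
    (fun i : Fin n => e i.succ - z • e i.castSucc) (by rwa [Fintype.card_fin])
  have hzz : z * starRingEnd 𝕜 z = 1 := by rw [RCLike.mul_conj, hz]; norm_num
  have hep (i : Fin n) : inner 𝕜 (e i.castSucc) p = inner 𝕜 (e i.succ) (z • p) := by
    have hi : inner 𝕜 (e i.succ) p = starRingEnd 𝕜 z * inner 𝕜 (e i.castSucc) p := by
      rw [← inner_smul_left, ← sub_eq_zero, ← inner_sub_left, hp]
    rw [inner_smul_right, hi, ← mul_assoc, hzz, one_mul]
  have hpe (i : Fin n) : inner 𝕜 p (e i.castSucc) = inner 𝕜 (z • p) (e i.succ) := by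
    rw [← inner_conj_symm, hep, inner_conj_symm]
  have hpp : inner 𝕜 p p = inner 𝕜 (z • p) (z • p) := by
    rw [inner_smul_left, inner_smul_right, ← mul_assoc, mul_comm _ z, hzz, one_mul]
  have hgram : gram 𝕜 (Fin.cons p fun i : Fin n => e i.castSucc : Fin (n + 1) → E) =
      gram 𝕜 (Fin.cons (z • p) fun i : Fin n => e i.succ : Fin (n + 1) → E) := by
    ext i j
    cases i using Fin.cases <;> cases j using Fin.cases <;>
      simp only [gram_apply, Fin.cons_zero, Fin.cons_succ, hpp, hep, hpe, he]
  obtain ⟨U, hU⟩ := exists_linearIsometry_of_gram_eq hgram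
  exact ⟨U, fun i => hU i.succ, p, hp₀, hU 0⟩

end Isometry

theorem exists_orthonormalBasis_linearIsometry_apply_eq_smul {E : Type*} [NormedAddCommGroup E]
    [InnerProductSpace ℂ E] [FiniteDimensional ℂ E] (U : E →ₗᵢ[ℂ] E) {n : ℕ}
    (hn : Module.finrank ℂ E = n) :
    ∃ (b : OrthonormalBasis (Fin n) ℂ E) (μ : Fin n → Circle),
      ∀ i, U (b i) = (μ i : ℂ) • b i := by
  let V (μ : Module.End.Eigenvalues U.toLinearMap) : Submodule ℂ E :=
    Module.End.eigenspace U.toLinearMap μ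
  have hV : OrthogonalFamily ℂ (fun μ => V μ) fun μ => (V μ).subtypeₗᵢ :=
    (orthogonalFamily_eigenspaces_linearIsometry U).comp Subtype.val_injective
  have hsup : iSup V = ⊤ := by
    change ⨆ μ : {μ // Module.End.eigenspace U.toLinearMap μ ≠ ⊥},
      Module.End.eigenspace U.toLinearMap μ = ⊤
    rw [iSup_ne_bot_subtype, (linearIsometry_isSemisimple U).iSup_eigenspace_eq_top]
  have hint : DirectSum.IsInternal V :=
    hV.isInternal_iff.mpr (Submodule.orthogonal_eq_bot_iff.mpr hsup)
  let b : OrthonormalBasis (Fin n) ℂ E := hint.subordinateOrthonormalBasis hn hV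
  let μ (i : Fin n) : ℂ := (hint.subordinateOrthonormalBasisIndex hn i hV).val
  have hb (i : Fin n) : U (b i) = μ i • b i :=
    Module.End.mem_eigenspace_iff.mp (hint.subordinateOrthonormalBasis_subordinate hn i hV)
  have hμ (i : Fin n) : ‖μ i‖ = 1 :=
    norm_eq_one_of_linearIsometry_apply_eq_smul U (b.orthonormal.ne_zero i) (hb i)
  exact ⟨b, fun i => ⟨μ i, mem_sphere_zero_iff_norm.mpr (hμ i)⟩, hb⟩

section Toeplitz

/-- A square matrix is Toeplitz if it is constant along each diagonal, encoded as equality of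
diagonally adjacent entries. -/
def IsToeplitz {α : Type*} {n : ℕ} (T : Matrix (Fin (n + 1)) (Fin (n + 1)) α) : Prop :=
  ∀ i j : Fin n, T i.succ j.succ = T i.castSucc j.castSucc

theorem isToeplitz_Ty (K : ℕ) (y : ℤ → ℂ) : IsToeplitz (Ty K y) := fun i j => by
  simp only [Ty, of_apply, Fin.val_succ, Fin.val_castSucc, Nat.cast_add, add_sub_add_right_eq_sub]

theorem exists_gram_eq_of_posSemidef {n : Type*} [Fintype n] {T : Matrix n n ℂ}
    (hT : T.PosSemidef) : ∃ e : n → EuclideanSpace ℂ n, gram ℂ e = T := by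
  classical
  open scoped MatrixOrder Matrix.Norms.L2Operator in
  obtain ⟨A, rfl⟩ := CStarAlgebra.nonneg_iff_eq_star_mul_self.mp hT.nonneg
  refine ⟨fun j => WithLp.toLp 2 fun i => A i j, ?_⟩
  ext i j
  simp only [gram_apply, PiLp.inner_apply, RCLike.inner_apply, mul_apply, star_apply,
    RCLike.star_def, mul_comm]

/-- The Toeplitz moment matrix of the measure `∑ l, a l • δ (μ l)` on the unit circle, encoded by
its Vandermonde factorization `Vᴴ D V`, from which its determinant can be read off. -/
def vandermondeGram {n : ℕ} (μ : Fin n → Circle) (a : Fin n → ℝ≥0) : Matrix (Fin n) (Fin n) ℂ :=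
  (vandermonde fun l => (μ l : ℂ))ᴴ * diagonal (fun l => ((a l : ℝ) : ℂ)) *
    vandermonde fun l => (μ l : ℂ)

theorem vandermondeGram_apply {n : ℕ} (μ : Fin n → Circle) (a : Fin n → ℝ≥0) (i j : Fin n) :
    vandermondeGram μ a i j = ∑ l, (a l : ℂ) * (μ l : ℂ) ^ ((j : ℤ) - (i : ℤ)) := by
  rw [vandermondeGram, mul_apply]
  refine Finset.sum_congr rfl fun l _ => ?_
  rw [mul_diagonal, conjTranspose_apply, vandermonde_apply, vandermonde_apply,
    zpow_sub₀ (μ l).coe_ne_zero, zpow_natCast, zpow_natCast, star_pow, RCLike.star_def,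
    ← Circle.coe_inv_eq_conj, Circle.coe_inv, inv_pow]
  field

theorem injective_and_pos_of_vandermondeGram_posDef {n : ℕ} {μ : Fin n → Circle} {a : Fin n → ℝ≥0}
    (h : (vandermondeGram μ a).PosDef) : Function.Injective μ ∧ ∀ l, 0 < a l := by
  have hdet : (vandermondeGram μ a).det ≠ 0 := h.det_pos.ne'
  rw [vandermondeGram, det_mul, det_mul, det_diagonal] at hdet
  have ha : ∏ l, ((a l : ℝ) : ℂ) ≠ 0 := right_ne_zero_of_mul (left_ne_zero_of_mul hdet)
  have hμ : Function.Injective fun l => (μ l : ℂ) :=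
    det_vandermonde_ne_zero_iff.mp (right_ne_zero_of_mul hdet)
  refine ⟨fun l m hlm => hμ (congr_arg _ hlm), fun l => pos_iff_ne_zero.mpr fun hl => ?_⟩
  exact Finset.prod_ne_zero_iff.mp ha l (Finset.mem_univ l) (by simp [hl])

theorem exists_eq_vandermondeGram_of_posSemidef {n : ℕ} {T : Matrix (Fin (n + 1)) (Fin (n + 1)) ℂ}
    (hT : T.PosSemidef) (hToep : IsToeplitz T) (z : Circle) :
    ∃ (μ : Fin (n + 1) → Circle) (a : Fin (n + 1) → ℝ≥0),
      T = vandermondeGram μ a ∧ ∃ l, μ l = z := by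
  obtain ⟨e, rfl⟩ := exists_gram_eq_of_posSemidef hT
  have hdim : Module.finrank ℂ (EuclideanSpace ℂ (Fin (n + 1))) = n + 1 :=
    finrank_euclideanSpace_fin
  obtain ⟨U, hU, p, hp₀, hp⟩ := exists_linearIsometry_shift (e := e)
    (by rw [hdim]; exact n.lt_succ_self) (fun i j => hToep i j) z.norm_coe
  obtain ⟨b, μ, hb⟩ := exists_orthonormalBasis_linearIsometry_apply_eq_smul U hdim
  have hbU (l x) : inner ℂ (b l) (U x) = μ l * inner ℂ (b l) x :=
    inner_linearIsometry_apply_of_apply_eq_smul U (hb l) x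
  have hbe (l) (j : Fin (n + 1)) :
      inner ℂ (b l) (e j) = (μ l : ℂ) ^ (j : ℕ) * inner ℂ (b l) (e 0) := by
    induction j using Fin.induction with
    | zero => rw [Fin.val_zero, pow_zero, one_mul]
    | succ i ih => rw [← hU, hbU, ih, Fin.val_succ, Fin.val_castSucc, pow_succ', mul_assoc]
  refine ⟨μ, fun l => ‖inner ℂ (b l) (e 0)‖₊ ^ 2, ?_, ?_⟩
  · ext i j
    rw [gram_apply, ← b.sum_inner_mul_inner, vandermondeGram_apply]
    refine Finset.sum_congr rfl fun l _ => ?_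
    rw [← inner_conj_symm (e i), hbe l i, hbe l j, map_mul, map_pow, ← Circle.coe_inv_eq_conj,
      Circle.coe_inv, zpow_sub₀ (μ l).coe_ne_zero, zpow_natCast, zpow_natCast, inv_pow]
    push_cast
    rw [← Complex.conj_mul']
    field
  · obtain ⟨l, hl⟩ : ∃ l, inner ℂ (b l) p ≠ 0 := by
      by_contra! h
      exact hp₀ (InnerProductSpace.ext_inner_left_basis b.toBasis (by simpa using h))
    refine ⟨l, Circle.ext (mul_right_cancel₀ hl ?_)⟩
    rw [← hbU, hp, inner_smul_right]

end Toeplitz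

section PositiveMeasure

variable {α : Type*} [MeasurableSpace α]

theorem toJordanDecomposition_toSignedMeasure (μ : Measure α) [IsFiniteMeasure μ] :
    μ.toSignedMeasure.toJordanDecomposition = ⟨μ, 0, Measure.MutuallySingular.zero_right⟩ := by
  apply SignedMeasure.toJordanDecomposition_eq
  simp [JordanDecomposition.toSignedMeasure]

theorem toSignedMeasure_finsetSum {ι : Type*} (s : Finset ι) (μ : ι → Measure α)
    [∀ i, IsFiniteMeasure (μ i)] :
    (∑ i ∈ s, μ i).toSignedMeasure = ∑ i ∈ s, (μ i).toSignedMeasure := by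
  ext A hA
  rw [Measure.toSignedMeasure_apply_measurable hA]
  simp [hA, measureReal_def, ENNReal.toReal_sum]

theorem not_countable_of_forall_exists_atom [Uncountable α] {S : Set (SignedMeasure α)}
    (hcount : ∀ w ∈ S, {t | w {t} ≠ 0}.Countable) (hatom : ∀ t, ∃ w ∈ S, w {t} ≠ 0) :
    ¬ S.Countable := fun hS => by
  refine Set.not_countable_univ ((hS.biUnion hcount).mono fun t _ => ?_)
  obtain ⟨w, hw, hwt⟩ := hatom t
  exact Set.mem_biUnion hw hwt

end PositiveMeasure

theorem uncountable_addCircle (p : ℝ) [hp : Fact (0 < p)] : Uncountable (AddCircle p) := by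
  rw [(AddCircle.equivIco p 0).uncountable_iff, ← not_countable_iff,
    Set.countable_coe_iff, Cardinal.Real.Ico_countable_iff, not_le, zero_add]
  exact hp.out

theorem sFourierCoeff_toSignedMeasure (μ : Measure Circle2pi) [IsFiniteMeasure μ] (k : ℤ) :
    sFourierCoeff μ.toSignedMeasure k = ∫ t, fourier (-k) t ∂μ := by
  rw [sFourierCoeff, toJordanDecomposition_toSignedMeasure, integral_zero_measure, sub_zero]

theorem sFourierCoeff_zero (w : SignedMeasure Circle2pi) :
    sFourierCoeff w 0 = (w Set.univ : ℂ) := by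
  rw [sFourierCoeff, w.apply_eq_posPart_real_sub_negPart_real MeasurableSet.univ]
  simp

theorem tvNorm_toSignedMeasure (μ : Measure Circle2pi) [IsFiniteMeasure μ] :
    tvNorm μ.toSignedMeasure = μ.toSignedMeasure Set.univ := by
  rw [tvNorm, SignedMeasure.totalVariation, toJordanDecomposition_toSignedMeasure, add_zero,
    Measure.toSignedMeasure_apply_measurable MeasurableSet.univ, measureReal_def]

theorem isBPCSolution_toSignedMeasure {K : ℕ} {y : ℤ → ℂ} (μ : Measure Circle2pi)
    [IsFiniteMeasure μ] (hμ : Feasible K y μ.toSignedMeasure) :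
    IsBPCSolution K y μ.toSignedMeasure := by
  refine ⟨hμ, fun v hv => ?_⟩
  have hmass : μ.toSignedMeasure Set.univ = v Set.univ := by
    have h₀ := (hμ 0 (by simp)).trans (hv 0 (by simp)).symm
    rwa [sFourierCoeff_zero, sFourierCoeff_zero, Complex.ofReal_inj] at h₀
  calc tvNorm μ.toSignedMeasure = v Set.univ := by rw [tvNorm_toSignedMeasure, hmass]
    _ ≤ ‖v Set.univ‖ := Real.le_norm_self _
    _ ≤ tvNorm v := v.norm_le_totalVariation Set.univ

theorem feasible_iff_Ty_sFourierCoeff_eq {K : ℕ} {y : ℤ → ℂ} {w : SignedMeasure Circle2pi} :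
    Feasible K y w ↔ Ty K (sFourierCoeff w) = Ty K y := by
  constructor
  · intro h
    ext i j
    exact h _ (by rw [abs_le]; omega)
  · intro h k hk
    rw [abs_le] at hk
    have hentry := congr_fun₂ h ⟨(-k).toNat, by omega⟩ ⟨k.toNat, by omega⟩
    simp only [Ty, of_apply] at hentry
    rwa [show ((k.toNat : ℤ) - ((-k).toNat : ℤ)) = k by omega] at hentry

section DiracSum

variable {ι : Type*} [Fintype ι]

theorem toSignedMeasure_sum_smul_dirac (x : ι → Circle2pi) (a : ι → ℝ≥0) :
    (∑ i, a i • Measure.dirac (x i)).toSignedMeasure = ∑ i, (a i : ℝ) • diracSM (x i) := by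
  rw [toSignedMeasure_finsetSum]
  exact Finset.sum_congr rfl fun i _ => Measure.toSignedMeasure_smul _ _

theorem sFourierCoeff_sum_smul_diracSM (x : ι → Circle2pi) (a : ι → ℝ≥0) (k : ℤ) :
    sFourierCoeff (∑ i, (a i : ℝ) • diracSM (x i)) k =
      ∑ i, (a i : ℂ) * (AddCircle.toCircle (-x i) : ℂ) ^ k := by
  rw [← toSignedMeasure_sum_smul_dirac, sFourierCoeff_toSignedMeasure, integral_finsetSum_measure]
  · refine Finset.sum_congr rfl fun i _ => ?_
    rw [integral_smul_nnreal_measure, integral_dirac, fourier_apply, neg_smul, ← smul_neg,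
      AddCircle.toCircle_zsmul, Circle.coe_zpow, NNReal.smul_def, Complex.real_smul]
  · intro i _
    exact (integrable_dirac enorm_lt_top).smul_measure_nnreal

open scoped Classical in
theorem diracSM_apply_singleton (u t : Circle2pi) :
    diracSM u {t} = if u = t then 1 else 0 := by
  rw [diracSM, Measure.toSignedMeasure_apply_measurable (measurableSet_singleton t),
    measureReal_def, Measure.dirac_apply' _ (measurableSet_singleton t)]
  by_cases h : u = t <;> simp [h]

theorem sum_smul_diracSM_singleton_ne_zero_iff (x : ι → Circle2pi) {a : ι → ℝ}
    (ha : ∀ i, 0 < a i) {t : Circle2pi} :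
    (∑ i, a i • diracSM (x i)) {t} ≠ 0 ↔ t ∈ Set.range x := by
  classical
  have happly : (∑ i, a i • diracSM (x i)) {t} = ∑ i, if x i = t then a i else 0 := by
    simp [diracSM_apply_singleton]
  have hterm (i : ι) : 0 ≤ if x i = t then a i else 0 := by
    split_ifs
    exacts [(ha i).le, le_rfl]
  rw [happly, ne_eq, Finset.sum_eq_zero_iff_of_nonneg fun i _ => hterm i]
  simp [(ha _).ne']

end DiracSum

theorem Ty_sFourierCoeff_sum_smul_diracSM {K : ℕ} (x : Fin (K + 1) → Circle2pi)
    (a : Fin (K + 1) → ℝ≥0) :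
    Ty K (sFourierCoeff (∑ i, (a i : ℝ) • diracSM (x i))) =
      vandermondeGram (fun l => AddCircle.toCircle (-x l)) a := by
  ext i j
  rw [Ty, of_apply, sFourierCoeff_sum_smul_diracSM, vandermondeGram_apply]

theorem exists_isBPCSolution_through {K : ℕ} {y : ℤ → ℂ} (hpd : (Ty K y).PosDef) (t : Circle2pi) :
    ∃ (x : Fin (K + 1) → Circle2pi) (a : Fin (K + 1) → ℝ),
      IsBPCSolution K y (∑ i, a i • diracSM (x i)) ∧ Function.Injective x ∧ (∀ i, 0 < a i) ∧
        ∃ i, x i = t := by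
  obtain ⟨μ, a, hT, l, hl⟩ := exists_eq_vandermondeGram_of_posSemidef hpd.posSemidef
    (isToeplitz_Ty K y) (AddCircle.toCircle (-t))
  obtain ⟨hμ, ha⟩ := injective_and_pos_of_vandermondeGram_posDef (hT ▸ hpd)
  have hinj : Function.Injective (AddCircle.toCircle : Circle2pi → Circle) :=
    AddCircle.injective_toCircle (by positivity)
  obtain ⟨x, rfl⟩ : ∃ x : Fin (K + 1) → Circle2pi, μ = fun l => AddCircle.toCircle (-x l) := by
    have hsurj : Function.Surjective (AddCircle.toCircle : Circle2pi → Circle) := fun ζ => by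
      obtain ⟨s, hs⟩ := (AddCircle.homeomorphCircle (T := 2 * π) (by positivity)).surjective ζ
      exact ⟨s, by rw [← hs, AddCircle.homeomorphCircle_apply]⟩
    choose x hx using fun l => hsurj (μ l)
    exact ⟨fun l => -x l, funext fun l => by rw [neg_neg, hx]⟩
  refine ⟨x, fun i => a i, ?_, fun i j hij => hμ (by simp only [hij]), ha,
    l, neg_injective (hinj hl)⟩
  have hfeas : Feasible K y (∑ i, (a i : ℝ) • diracSM (x i)) :=
    feasible_iff_Ty_sFourierCoeff_eq.mpr ((Ty_sFourierCoeff_sum_smul_diracSM x a).trans hT.symm)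
  rw [← toSignedMeasure_sum_smul_dirac] at hfeas ⊢
  exact isBPCSolution_toSignedMeasure _ hfeas

/-- If `T_y` is positive definite, then the set of solutions of (BPC) consisting of
`K_c + 1` Dirac masses with strictly positive weights at pairwise distinct points is
uncountable; in fact, for every `t ∈ 𝕋` there is such a solution having `t` among its
atoms. -/
theorem uncountably_many_solutions_of_Ty_posDef (Kc : ℕ) (hKc : 1 ≤ Kc) (y : ℤ → ℂ)
    (hsym : ∀ k : ℤ, |k| ≤ (Kc : ℤ) → y (-k) = starRingEnd ℂ (y k))
    (hpd : (Ty Kc y).PosDef) :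
    ¬ Set.Countable {w : MeasureTheory.SignedMeasure Circle2pi |
        IsBPCSolution Kc y w ∧
        ∃ (x : Fin (Kc + 1) → Circle2pi) (a : Fin (Kc + 1) → ℝ),
          Function.Injective x ∧ (∀ i, 0 < a i) ∧ w = ∑ i, a i • diracSM (x i)} ∧
    ∀ t : Circle2pi,
      ∃ (w : MeasureTheory.SignedMeasure Circle2pi) (x : Fin (Kc + 1) → Circle2pi)
        (a : Fin (Kc + 1) → ℝ),
        IsBPCSolution Kc y w ∧ Function.Injective x ∧ (∀ i, 0 < a i) ∧
        (∃ i, x i = t) ∧ w = ∑ i, a i • diracSM (x i) := by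
  constructor
  · have := uncountable_addCircle (2 * π)
    refine not_countable_of_forall_exists_atom ?_ fun t => ?_
    · rintro _ ⟨-, x, a, -, ha, rfl⟩
      exact (Set.countable_range x).mono fun t =>
        (sum_smul_diracSM_singleton_ne_zero_iff x ha).mp
    · obtain ⟨x, a, hsol, hx, ha, ht⟩ := exists_isBPCSolution_through hpd t
      exact ⟨_, ⟨hsol, x, a, hx, ha, rfl⟩, (sum_smul_diracSM_singleton_ne_zero_iff x ha).mpr ht⟩
  · intro t
    obtain ⟨x, a, hsol, hx, ha, ht⟩ := exists_isBPCSolution_through hpd t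
    exact ⟨_, x, a, hsol, hx, ha, ht, rfl⟩
end
end
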